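/- arXiv:2309.05816 — 2 statements merged into one kernel-verified Lean document; each statement's English description precedes it below -/
import Mathlib

section
/- Let T : M → M be any mapping. Then T commutes with the utility transform T^u for every utility function u (i.e., T ∘ T^u = T^u ∘ T for all u ∈ F_U) if and only if there exists a distortion function d ∈ F_D such that T = T_d. -/
/-!
The easy direction rests on the shape of `{u ≤ y}` for continuous increasing `u`: it is empty, all
of `ℝ`, or `Iic s` with `u s = y`. In the last case `T^u K y = K s` for every cdf `K`, and since
`u` stays close to `y` near `s`, the right limit of `d ∘ T^u F` at `y` is the right limit of
`d ∘ F` at `s` (`distort_commute`).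

For the converse put `d p = T (p δ₀ + (1 - p) δ₁) 0`. Given `F` and `c`, let `G` be the cdf obtained
from `F` by inserting a gap of length one just after `c`. Collapsing the gap is a continuous
utility function sending `G` to `F`, while a ramp across the gap sends `G` to the two-point
distribution with mass `F c` at `0`. Commutation with both gives
`T F x ≤ d (F c) ≤ T F c` for all `x < c` (`sandwich`). Letting `c ↓ x`, right-continuity of `T F`
yields `T F x = (d ∘ F)(x+)`. Monotonicity of `d` is the same sandwich for the uniform
distribution, and `d 0 = 0`, `d 1 = 1` follow from commutation with constant utilities.
-/

open MeasureTheory Filter Topology Set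

noncomputable section

/-- The set of cdfs of compactly supported probability distributions on ℝ:
increasing, right-continuous, equal to `0` for all sufficiently small `x` and
equal to `1` for all sufficiently large `x`. -/
def mSet : Set (ℝ → ℝ) :=
  {F | Monotone F ∧ (∀ x, ContinuousWithinAt F (Set.Ici x) x) ∧
    (∃ a, ∀ x ≤ a, F x = 0) ∧ (∃ b, ∀ x, b ≤ x → F x = 1)}

/-- The set of cdfs of all probability distributions on ℝ: increasing,
right-continuous, with limit `0` at `-∞` and limit `1` at `+∞`. -/
def m0Set : Set (ℝ → ℝ) :=
  {F | Monotone F ∧ (∀ x, ContinuousWithinAt F (Set.Ici x) x) ∧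
    Tendsto F atBot (𝓝 0) ∧ Tendsto F atTop (𝓝 1)}

/-- A utility function: increasing (non-strict) and continuous. -/
def IsUF (u : ℝ → ℝ) : Prop := Monotone u ∧ Continuous u

/-- An increasing and left-continuous function on ℝ. -/
def IsLeftCtsIncr (u : ℝ → ℝ) : Prop :=
  Monotone u ∧ ∀ x, ContinuousWithinAt u (Set.Iic x) x

/-- A distortion function: an increasing function `d : [0,1] → [0,1]` with
`d 0 = 0` and `d 1 = 1` (values outside `[0,1]` are irrelevant). -/
def IsDF (d : ℝ → ℝ) : Prop :=
  MonotoneOn d (Set.Icc 0 1) ∧ d 0 = 0 ∧ d 1 = 1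

/-- Right-continuity of a distortion function on `[0,1)`. -/
def DFRightCts (d : ℝ → ℝ) : Prop :=
  ∀ x ∈ Set.Ico (0:ℝ) 1, ContinuousWithinAt d (Set.Ioi x) x

/-- A distortion function with moreover `d(0+) = 0` and `d(1-) = 1`. -/
def IsDFhat (d : ℝ → ℝ) : Prop :=
  IsDF d ∧ Tendsto d (𝓝[>] (0:ℝ)) (𝓝 0) ∧ Tendsto d (𝓝[<] (1:ℝ)) (𝓝 1)

/-- The probability distortion generated by `d`:  `T_d F x = (d ∘ F)(x+)`,
the right limit of `d ∘ F` at `x`. -/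
noncomputable def distortT (d F : ℝ → ℝ) : ℝ → ℝ :=
  fun x => Function.rightLim (d ∘ F) x

/-- The utility transform `T^u`: it maps a cdf `F` to the cdf of the
pushforward under `u` of the probability measure with cdf `F`. -/
noncomputable def utilityT (u F : ℝ → ℝ) : ℝ → ℝ := by
  classical
  exact
    if h : Monotone F ∧ ∀ x, ContinuousWithinAt F (Set.Ici x) x then
      fun x => ((StieltjesFunction.measure ⟨F, h.1, h.2⟩).map u (Set.Iic x)).toReal
    else F

/-- Left quantile `F_L^{-1}(p) = inf {x | F x ≥ p}`. -/
noncomputable def leftQ (F : ℝ → ℝ) (p : ℝ) : ℝ := sInf {x | p ≤ F x}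

/-- Right quantile `F_R^{-1}(p) = inf {x | F x > p}`. -/
noncomputable def rightQ (F : ℝ → ℝ) (p : ℝ) : ℝ := sInf {x | p < F x}

/-! ### The utility transform of a cdf -/

lemma mSet_tendsto_atBot {F : ℝ → ℝ} (hF : F ∈ mSet) : Tendsto F atBot (𝓝 0) := by
  obtain ⟨a, ha⟩ := hF.2.2.1
  exact tendsto_const_nhds.congr' (by
    filter_upwards [eventually_le_atBot a] with x hx using (ha x hx).symm)

lemma mSet_tendsto_atTop {F : ℝ → ℝ} (hF : F ∈ mSet) : Tendsto F atTop (𝓝 1) := by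
  obtain ⟨b, hb⟩ := hF.2.2.2
  exact tendsto_const_nhds.congr' (by
    filter_upwards [eventually_ge_atTop b] with x hx using (hb x hx).symm)

lemma mSet_nonneg {F : ℝ → ℝ} (hF : F ∈ mSet) (x : ℝ) : 0 ≤ F x :=
  hF.1.le_of_tendsto (mSet_tendsto_atBot hF) x

lemma mSet_le_one {F : ℝ → ℝ} (hF : F ∈ mSet) (x : ℝ) : F x ≤ 1 :=
  hF.1.ge_of_tendsto (mSet_tendsto_atTop hF) x

/-- The probability measure behind `F ∈ mSet`, together with the values it gives to
half-lines and to preimages under utility functions. -/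
lemma exists_measure {F : ℝ → ℝ} (hF : F ∈ mSet) :
    ∃ μ : Measure ℝ, IsProbabilityMeasure μ ∧ (∀ x, μ.real (Iic x) = F x) ∧
      ∀ u, IsUF u → ∀ y, utilityT u F y = μ.real (u ⁻¹' Iic y) := by
  let f : StieltjesFunction ℝ := ⟨F, hF.1, hF.2.1⟩
  refine ⟨f.measure, f.isProbabilityMeasure (mSet_tendsto_atBot hF) (mSet_tendsto_atTop hF),
    fun x => ?_, fun u hu y => ?_⟩
  · rw [measureReal_def, f.measure_Iic (mSet_tendsto_atBot hF), sub_zero]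
    exact ENNReal.toReal_ofReal (mSet_nonneg hF x)
  · have h : Monotone F ∧ ∀ x, ContinuousWithinAt F (Set.Ici x) x := ⟨hF.1, hF.2.1⟩
    rw [utilityT, dif_pos h, Measure.map_apply hu.2.measurable measurableSet_Iic]
    rfl

lemma utilityT_of_preimage_Iic {F u : ℝ → ℝ} (hF : F ∈ mSet) (hu : IsUF u) {y s : ℝ}
    (h : ∀ x, u x ≤ y ↔ x ≤ s) : utilityT u F y = F s := by
  obtain ⟨μ, _, h1, h2⟩ := exists_measure hF
  rw [h2 u hu, ← h1]
  congr 1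
  ext x
  exact h x

lemma utilityT_of_preimage_empty {F u : ℝ → ℝ} (hF : F ∈ mSet) (hu : IsUF u) {y : ℝ}
    (h : ∀ x, y < u x) : utilityT u F y = 0 := by
  obtain ⟨μ, _, h1, h2⟩ := exists_measure hF
  have : u ⁻¹' Iic y = ∅ := by
    ext x
    simpa using h x
  rw [h2 u hu, this, measureReal_empty]

lemma utilityT_of_preimage_univ {F u : ℝ → ℝ} (hF : F ∈ mSet) (hu : IsUF u) {y : ℝ}
    (h : ∀ x, u x ≤ y) : utilityT u F y = 1 := by
  obtain ⟨μ, _, h1, h2⟩ := exists_measure hF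
  have : u ⁻¹' Iic y = univ := by
    ext x
    simpa using h x
  rw [h2 u hu, this, probReal_univ]

lemma le_utilityT {F u : ℝ → ℝ} (hF : F ∈ mSet) (hu : IsUF u) {y s : ℝ}
    (h : u s ≤ y) : F s ≤ utilityT u F y := by
  obtain ⟨μ, _, h1, h2⟩ := exists_measure hF
  rw [h2 u hu, ← h1]
  exact measureReal_mono fun x hx => (hu.1 hx).trans h

lemma utilityT_le {F u : ℝ → ℝ} (hF : F ∈ mSet) (hu : IsUF u) {y s : ℝ}
    (h : y < u s) : utilityT u F y ≤ F s := by
  obtain ⟨μ, _, h1, h2⟩ := exists_measure hF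
  rw [h2 u hu, ← h1]
  exact measureReal_mono fun x hx => (hu.1.reflect_lt ((mem_Iic.1 hx).trans_lt h)).le

lemma utilityT_mem {F u : ℝ → ℝ} (hF : F ∈ mSet) (hu : IsUF u) : utilityT u F ∈ mSet := by
  obtain ⟨μ, _, h1, h2⟩ := exists_measure hF
  have := Measure.isProbabilityMeasure_map (μ := μ) hu.2.measurable.aemeasurable
  have key : utilityT u F = ProbabilityTheory.cdf (μ.map u) := by
    ext y
    rw [h2 u hu, ProbabilityTheory.cdf_eq_real,
      map_measureReal_apply hu.2.measurable measurableSet_Iic]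
  have bounds : ∀ y, 0 ≤ utilityT u F y ∧ utilityT u F y ≤ 1 := fun y => by
    rw [h2 u hu]
    exact ⟨measureReal_nonneg, measureReal_le_one⟩
  refine ⟨key ▸ (ProbabilityTheory.cdf _).mono, key ▸ (ProbabilityTheory.cdf _).right_continuous,
    ?_, ?_⟩
  · obtain ⟨a, ha⟩ := hF.2.2.1
    refine ⟨u a - 1, fun x hx => le_antisymm ?_ (bounds x).1⟩
    rw [← ha a le_rfl]
    exact utilityT_le hF hu (by linarith)
  · obtain ⟨b, hb⟩ := hF.2.2.2
    refine ⟨u b, fun x hx => le_antisymm (bounds x).2 ?_⟩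
    rw [← hb b le_rfl]
    exact le_utilityT hF hu hx

/-! ### Distortions commute with utility transforms -/

lemma monotone_distort {d F : ℝ → ℝ} (hd : IsDF d) (hF : F ∈ mSet) : Monotone (d ∘ F) :=
  fun _ _ h => hd.1 ⟨mSet_nonneg hF _, mSet_le_one hF _⟩ ⟨mSet_nonneg hF _, mSet_le_one hF _⟩
    (hF.1 h)

/-- A utility function has `{u ≤ y}` empty, everything, or `Iic s` with `u s = y`. -/
lemma preimage_cases {u : ℝ → ℝ} (hu : IsUF u) (y : ℝ) :
    (∀ x, y < u x) ∨ (∀ x, u x ≤ y) ∨ ∃ s, u s = y ∧ ∀ x, u x ≤ y ↔ x ≤ s := by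
  by_cases h1 : ∀ x, y < u x
  · exact Or.inl h1
  by_cases h2 : ∀ x, u x ≤ y
  · exact Or.inr (Or.inl h2)
  push Not at h1 h2
  obtain ⟨p, hp⟩ := h1
  obtain ⟨q, hq⟩ := h2
  refine Or.inr (Or.inr ?_)
  have hbdd : BddAbove {x | u x ≤ y} :=
    ⟨q, fun x hx => (hu.1.reflect_lt (lt_of_le_of_lt hx hq)).le⟩
  have hcl : IsClosed {x | u x ≤ y} := isClosed_le hu.2 continuous_const
  have hmem : u (sSup {x | u x ≤ y}) ≤ y := hcl.csSup_mem ⟨p, hp⟩ hbdd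
  have hiff : ∀ x, u x ≤ y ↔ x ≤ sSup {x | u x ≤ y} :=
    fun x => ⟨fun hx => le_csSup hbdd hx, fun hx => (hu.1 hx).trans hmem⟩
  refine ⟨_, le_antisymm hmem ?_, hiff⟩
  refine ge_of_tendsto (hu.2.continuousWithinAt (s := Ioi (sSup {x | u x ≤ y}))) ?_
  filter_upwards [self_mem_nhdsWithin] with x hx
  by_contra! hlt
  exact absurd ((hiff x).1 hlt.le) (not_le.2 hx)

/-- The identity `T_d (T^u F) = T^u (T_d F)` at one point, where `K` is the cdf `T_d F`. -/
lemma distort_commute {d F K u : ℝ → ℝ} (hd : IsDF d) (hF : F ∈ mSet) (hK : K ∈ mSet)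
    (hKF : K = distortT d F) (hu : IsUF u) (y : ℝ) :
    distortT d (utilityT u F) y = utilityT u K y := by
  have hH := utilityT_mem hF hu
  have hm := monotone_distort hd hF
  have hmem : ∀ {G : ℝ → ℝ}, G ∈ mSet → ∀ x, G x ∈ Icc (0 : ℝ) 1 :=
    fun hG x => ⟨mSet_nonneg hG x, mSet_le_one hG x⟩
  refine rightLim_eq_of_tendsto ?_
  rcases preimage_cases hu y with h | h | ⟨s, hs, h⟩
  · rw [utilityT_of_preimage_empty hK hu h]
    refine tendsto_const_nhds.congr' ?_
    obtain ⟨a, ha⟩ := hF.2.2.1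
    filter_upwards [Ioo_mem_nhdsGT (h a)] with z hz
    have : utilityT u F z = 0 :=
      le_antisymm ((utilityT_le hF hu hz.2).trans (ha a le_rfl).le) (mSet_nonneg hH z)
    simp [this, hd.2.1]
  · rw [utilityT_of_preimage_univ hK hu h]
    refine tendsto_const_nhds.congr' ?_
    filter_upwards [self_mem_nhdsWithin] with z hz
    have : utilityT u F z = 1 :=
      utilityT_of_preimage_univ hF hu fun x => (h x).trans (le_of_lt hz)
    simp [this, hd.2.2]
  · rw [utilityT_of_preimage_Iic hK hu h, hKF]
    have hlim : Tendsto (d ∘ F) (𝓝[>] s) (𝓝 (distortT d F s)) := hm.tendsto_rightLim s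
    refine tendsto_order.2 ⟨fun b hb => ?_, fun b hb => ?_⟩
    · filter_upwards [self_mem_nhdsWithin] with z hz
      -- Since `u s = y < z`, continuity gives a point right of `s` where `u` is still below `z`.
      have hev : ∀ᶠ x in 𝓝[>] s, u x < z :=
        (hu.2.continuousWithinAt (s := Ioi s)).eventually_lt_const (by rw [hs]; exact hz)
      obtain ⟨t, ht, hst⟩ := (hev.and self_mem_nhdsWithin).exists
      exact hb.trans_le ((hm.rightLim_le hst).trans
        (hd.1 (hmem hF t) (hmem hH z) (le_utilityT hF hu ht.le)))
    · obtain ⟨c, hc, hsc⟩ := ((hlim.eventually_lt_const hb).and self_mem_nhdsWithin).exists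
      have hyc : y < u c := not_le.1 fun hle => absurd ((h c).1 hle) (not_le.2 hsc)
      filter_upwards [Ioo_mem_nhdsGT hyc] with z hz
      exact (hd.1 (hmem hH z) (hmem hF c) (utilityT_le hF hu hz.2)).trans_lt hc

/-! ### Maps commuting with utility transforms are distortions -/

/-- The cdf of the two-point distribution `p δ₀ + (1 - p) δ₁`. -/
def bernoulliCdf (p : ℝ) : ℝ → ℝ := fun x => if x < 0 then 0 else if x < 1 then p else 1

/-- The cdf of `X + 1_{X > c}` where `X` has cdf `F`: the distribution `F` with a gap of
length one inserted just after `c`. -/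
def gapCdf (F : ℝ → ℝ) (c : ℝ) : ℝ → ℝ := fun x => F (min x c) + (F (max (x - 1) c) - F c)

/-- The utility function collapsing the gap `[c, c + 1]` to the point `c`. -/
def collapse (c : ℝ) : ℝ → ℝ := fun x => max (min x c) (x - 1)

/-- The utility function rising linearly from `0` to `1` on `[c, c + 1]`, constant elsewhere. -/
def ramp (c : ℝ) : ℝ → ℝ := fun x => max 0 (min 1 (x - c))

lemma isUF_collapse (c : ℝ) : IsUF (collapse c) :=
  ⟨fun x y h => by unfold collapse; gcongr, by unfold collapse; fun_prop⟩

lemma isUF_ramp (c : ℝ) : IsUF (ramp c) :=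
  ⟨fun x y h => by unfold ramp; gcongr, by unfold ramp; fun_prop⟩

lemma isUF_const (t : ℝ) : IsUF (fun _ => t) := ⟨monotone_const, continuous_const⟩

/-- The uniform distribution on `[0, 1]`, whose cdf is `ramp 0`. -/
lemma uniform_mem : ramp 0 ∈ mSet :=
  ⟨(isUF_ramp 0).1, fun _ => (isUF_ramp 0).2.continuousWithinAt,
    ⟨0, fun x hx => by simp [ramp, hx]⟩, ⟨1, fun x hx => by simp [ramp, hx]⟩⟩

lemma ramp_zero_eq {p : ℝ} (hp : p ∈ Icc (0 : ℝ) 1) : ramp 0 p = p := by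
  simp [ramp, hp.1, hp.2]

lemma gapCdf_mem {F : ℝ → ℝ} (hF : F ∈ mSet) (c : ℝ) : gapCdf F c ∈ mSet := by
  refine ⟨fun x y h => ?_, fun x => ?_, ?_, ?_⟩
  · have h1 : F (min x c) ≤ F (min y c) := hF.1 (by gcongr)
    have h2 : F (max (x - 1) c) ≤ F (max (y - 1) c) := hF.1 (by gcongr)
    unfold gapCdf
    linarith
  · -- Precomposition with a continuous increasing map preserves right-continuity.
    have comp : ∀ φ : ℝ → ℝ, IsUF φ → ContinuousWithinAt (fun x => F (φ x)) (Ici x) x :=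
      fun φ hφ => (hF.2.1 (φ x)).comp hφ.2.continuousWithinAt fun z hz => hφ.1 hz
    exact (comp (fun x => min x c) ⟨fun x y h => by dsimp only; gcongr, by fun_prop⟩).add
      ((comp (fun x => max (x - 1) c) ⟨fun x y h => by dsimp only; gcongr, by fun_prop⟩).sub
        continuousWithinAt_const)
  · obtain ⟨a, ha⟩ := hF.2.2.1
    refine ⟨min a c, fun x hx => ?_⟩
    have hxa := hx.trans (min_le_left _ _)
    have hxc := hx.trans (min_le_right _ _)
    simp [gapCdf, min_eq_left hxc, max_eq_right (show x - 1 ≤ c by linarith), ha x hxa]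
  · obtain ⟨b, hb⟩ := hF.2.2.2
    refine ⟨max b c + 1, fun x hx => ?_⟩
    have hxb : b ≤ x - 1 := by linarith [le_max_left b c]
    have hxc : c ≤ x - 1 := by linarith [le_max_right b c]
    simp [gapCdf, min_eq_right (show c ≤ x by linarith), max_eq_left hxc, hb _ hxb]

lemma utilityT_collapse {F : ℝ → ℝ} (hF : F ∈ mSet) (c : ℝ) :
    utilityT (collapse c) (gapCdf F c) = F := by
  ext y
  rcases lt_or_ge y c with h | h
  · rw [utilityT_of_preimage_Iic (gapCdf_mem hF c) (isUF_collapse c) (s := y)]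
    · simp [gapCdf, min_eq_left h.le, max_eq_right (show y - 1 ≤ c by linarith)]
    · intro x
      simp only [collapse, max_le_iff, min_le_iff]
      grind
  · rw [utilityT_of_preimage_Iic (gapCdf_mem hF c) (isUF_collapse c) (s := y + 1)]
    · simp [gapCdf, min_eq_right (show c ≤ y + 1 by linarith), h]
    · intro x
      simp only [collapse, max_le_iff, min_le_iff]
      grind

lemma utilityT_ramp {F : ℝ → ℝ} (hF : F ∈ mSet) (c : ℝ) :
    utilityT (ramp c) (gapCdf F c) = bernoulliCdf (F c) := by
  ext y
  unfold bernoulliCdf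
  split_ifs with h0 h1
  · exact utilityT_of_preimage_empty (gapCdf_mem hF c) (isUF_ramp c)
      fun x => h0.trans_le (le_max_left _ _)
  · rw [utilityT_of_preimage_Iic (gapCdf_mem hF c) (isUF_ramp c) (s := c + y)]
    · simp [gapCdf, min_eq_right (show c ≤ c + y by linarith),
        max_eq_right (show c + y - 1 ≤ c by linarith)]
    · intro x
      simp only [ramp, max_le_iff, min_le_iff]
      grind
  · exact utilityT_of_preimage_univ (gapCdf_mem hF c) (isUF_ramp c)
      fun x => by simp only [ramp, max_le_iff, min_le_iff]; grind

lemma utilityT_const_zero {F : ℝ → ℝ} (hF : F ∈ mSet) :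
    utilityT (fun _ => 0) F = bernoulliCdf 1 := by
  ext y
  unfold bernoulliCdf
  split_ifs with h0
  · exact utilityT_of_preimage_empty hF (isUF_const 0) fun _ => h0
  all_goals exact utilityT_of_preimage_univ hF (isUF_const 0) fun _ => not_lt.1 h0

lemma utilityT_const_one {F : ℝ → ℝ} (hF : F ∈ mSet) :
    utilityT (fun _ => 1) F = bernoulliCdf 0 := by
  ext y
  unfold bernoulliCdf
  split_ifs with h0 h1
  · exact utilityT_of_preimage_empty hF (isUF_const 1) fun _ => h0.trans one_pos
  · exact utilityT_of_preimage_empty hF (isUF_const 1) fun _ => h1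
  · exact utilityT_of_preimage_univ hF (isUF_const 1) fun _ => not_lt.1 h1

/-- With `d p = T (p δ₀ + (1 - p) δ₁) 0`, inserting a gap after `c` gives a cdf `G` that maps to
`F` and to a two-point distribution; hence `d (F c) = T G c`, and `T F` is `T G` with the gap
collapsed. So `d (F c)` separates the values of `T F` left of `c` from those right of `c`. -/
lemma sandwich {T : (ℝ → ℝ) → ℝ → ℝ} (hT : ∀ F ∈ mSet, T F ∈ mSet)
    (hcomm : ∀ u : ℝ → ℝ, IsUF u → ∀ F ∈ mSet, T (utilityT u F) = utilityT u (T F))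
    {F : ℝ → ℝ} (hF : F ∈ mSet) (c : ℝ) :
    T (bernoulliCdf (F c)) 0 ≤ T F c ∧ ∀ x < c, T F x ≤ T (bernoulliCdf (F c)) 0 := by
  have hG := gapCdf_mem hF c
  have hTG := hT _ hG
  have h1 := hcomm _ (isUF_collapse c) _ hG
  have h2 := hcomm _ (isUF_ramp c) _ hG
  rw [utilityT_collapse hF] at h1
  rw [utilityT_ramp hF] at h2
  rw [h1, h2, utilityT_of_preimage_Iic hTG (isUF_ramp c) (s := c)]
  · refine ⟨le_utilityT hTG (isUF_collapse c) (by simp [collapse]), fun x hx => ?_⟩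
    exact utilityT_le hTG (isUF_collapse c) (by simpa [collapse] using hx)
  · intro x
    simp only [ramp, max_le_iff, min_le_iff]
    grind

/-- A map `T : M → M` commutes with the utility transform `T^u` for every
utility function `u` if and only if `T = T_d` for some distortion function `d`. -/
theorem stmt0 (T : (ℝ → ℝ) → ℝ → ℝ) (hT : ∀ F ∈ mSet, T F ∈ mSet) :
    (∀ u : ℝ → ℝ, IsUF u → ∀ F ∈ mSet, T (utilityT u F) = utilityT u (T F)) ↔
      ∃ d : ℝ → ℝ, IsDF d ∧ ∀ F ∈ mSet, T F = distortT d F := by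
  constructor
  · intro hcomm
    have key := fun {F : ℝ → ℝ} (hF : F ∈ mSet) c => sandwich hT hcomm hF c
    have hd : IsDF fun p => T (bernoulliCdf p) 0 := by
      refine ⟨fun p hp q hq hpq => ?_, ?_, ?_⟩
      · rcases hpq.eq_or_lt with rfl | hlt
        · exact le_rfl
        -- The uniform cdf takes the values `p` and `q` at `p` and `q`.
        have h1 := (key uniform_mem p).1
        have h2 := (key uniform_mem q).2 p hlt
        rw [ramp_zero_eq hp] at h1
        rw [ramp_zero_eq hq] at h2
        exact h1.trans h2
      · have h := hcomm _ (isUF_const 1) _ uniform_mem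
        rw [utilityT_const_one uniform_mem, utilityT_const_one (hT _ uniform_mem)] at h
        simp [h, bernoulliCdf]
      · have h := hcomm _ (isUF_const 0) _ uniform_mem
        rw [utilityT_const_zero uniform_mem, utilityT_const_zero (hT _ uniform_mem)] at h
        simp [h, bernoulliCdf]
    refine ⟨_, hd, fun F hF => ?_⟩
    ext x
    have hlim : Tendsto ((fun p => T (bernoulliCdf p) 0) ∘ F) (𝓝[>] x)
        (𝓝 (distortT (fun p => T (bernoulliCdf p) 0) F x)) :=
      (monotone_distort hd hF).tendsto_rightLim x
    have hright : Tendsto (T F) (𝓝[>] x) (𝓝 (T F x)) :=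
      ((hT F hF).2.1 x).mono_left (nhdsWithin_mono x Ioi_subset_Ici_self)
    apply le_antisymm
    · refine ge_of_tendsto hlim ?_
      filter_upwards [self_mem_nhdsWithin] with c hc using (key hF c).2 x hc
    · exact le_of_tendsto_of_tendsto hlim hright (Eventually.of_forall fun c => (key hF c).1)
  · rintro ⟨d, hd, hTd⟩ u hu F hF
    ext y
    rw [hTd _ (utilityT_mem hF hu)]
    exact distort_commute hd hF (hT F hF) (hTd F hF) hu y
end
end

section
/- Let T : M → M be a monotone distributional transform. Then T commutes with the set 𝒟^R of probability distortions generated by right-continuous distortion functions (i.e., 𝒟^R ∘ T = T ∘ 𝒟^R as sets of maps) if and only if T = T_d ∘ T^u for some increasing left-continuous u : ℝ → ℝ and some strictly increasing continuous distortion function d ∈ F_D. -/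
/-!
For a right-continuous distortion function `d` and a cdf `F` one has `T_d F = d ∘ F`
(`distortT_eq_comp`). For left-continuous increasing `u` each set `{u ≤ x}` is empty, all of `ℝ`,
or a closed half-line `(-∞, a]`, so `T^u F x` is `0`, `1` or `F a` (`utilityT_cases`).

Suppose `T = T_d ∘ T^u`. By the description above `T^u` commutes with every `T_e`, `e`
right-continuous, so conjugation `e ↦ d ∘ e ∘ d⁻¹` is a bijection of the right-continuous
distortion functions that matches `T_{d e d⁻¹} ∘ T` with `T ∘ T_e`.

Conversely, suppose `T` commutes with the set of distortions. Point masses are fixed by all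
distortions, so each `T δ_x` is fixed by all distortions, in particular by `t ↦ t ^ 2`; hence it
is a point mass `δ_{u x}`, and `u` is increasing. If `u` is constant, monotonicity forces `T` to be
constant. Otherwise take `u a < u b` and put
`ψ t = T (t δ_a + (1 - t) δ_b) (u a)`. Whenever `T_{d'} ∘ T = T ∘ T_d`, evaluation at two-point
laws gives `d' ∘ ψ = ψ ∘ d` on `[0, 1]`. Letting `d` run through the indicator functions of
`[p, 1]` shows that `ψ` is strictly increasing; letting `d'` run through functions with a prescribed
value at `ψ (1/2)` shows that `ψ` is onto `[0, 1]`. For `d'` the indicator of `[ψ p, 1]` the same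
relation forces `d` to be the indicator of `[p, 1]`, and therefore, with `q` the left
`p`-quantile of `F`,
`ψ p ≤ T F x ↔ u q ≤ x` (`exists_quantile_rule`). Uniform laws now give left-continuity of `u`,
and comparison with `T^u` gives `T F = ψ ∘ T^u F`.
-/


open MeasureTheory Filter Topology Set

noncomputable section

/-! ### Distortion functions and cdfs -/

/-- The indicator of `[p, ∞)`. It serves both as the cdf of the point mass at `p` and, for
`p ∈ (0, 1]`, as a distortion function. -/
def stepFn (p : ℝ) : ℝ → ℝ := fun x => if p ≤ x then 1 else 0

/-- The cdf of the law with mass `t` at `a` and mass `1 - t` at `b`, for `a < b`. -/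
def twoPoint (a b t : ℝ) : ℝ → ℝ := fun x => if x < a then 0 else if x < b then t else 1

lemma IsDF.mem {d : ℝ → ℝ} (hd : IsDF d) {t : ℝ} (ht : t ∈ Icc (0 : ℝ) 1) :
    d t ∈ Icc (0 : ℝ) 1 := by
  constructor
  · rw [← hd.2.1]; exact hd.1 (by simp) ht ht.1
  · rw [← hd.2.2]; exact hd.1 ht (by simp) ht.2

lemma mSet_mem_Icc {F : ℝ → ℝ} (hF : F ∈ mSet) (x : ℝ) : F x ∈ Icc (0 : ℝ) 1 := by
  obtain ⟨hm, -, ⟨a, ha⟩, ⟨b, hb⟩⟩ := hF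
  constructor
  · rw [← ha (min a x) (min_le_left _ _)]; exact hm (min_le_right _ _)
  · rw [← hb (max b x) (le_max_left _ _)]; exact hm (le_max_right _ _)

lemma comp_rightCts {d G : ℝ → ℝ} (hr : DFRightCts d) (hm : Monotone G)
    (hc : ∀ x, ContinuousWithinAt G (Ici x) x) (hG : ∀ x, G x ∈ Icc (0 : ℝ) 1) (x : ℝ) :
    ContinuousWithinAt (d ∘ G) (Ici x) x := by
  rcases lt_or_ge (G x) 1 with h | h
  · have h1 : ContinuousWithinAt d (Ici (G x)) (G x) :=
      continuousWithinAt_Ioi_iff_Ici.1 (hr _ ⟨(hG x).1, h⟩)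
    exact h1.comp (hc x) fun y hy => hm hy
  · -- `G` is constantly `1` to the right of `x`.
    have : ∀ y ∈ Ici x, (d ∘ G) y = d 1 := fun y hy => by
      have := hm (mem_Ici.1 hy)
      have := (hG y).2
      simp only [Function.comp]
      congr 1; linarith
    exact (continuousWithinAt_const (b := d 1)).congr this (this x self_mem_Ici)

/-- For right-continuous `d`, the right limit in the definition of `T_d` is superfluous. -/
lemma distortT_eq_comp {d G : ℝ → ℝ} (hr : DFRightCts d) (hm : Monotone G)
    (hc : ∀ x, ContinuousWithinAt G (Ici x) x) (hG : ∀ x, G x ∈ Icc (0 : ℝ) 1) :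
    distortT d G = d ∘ G := by
  funext x
  exact (comp_rightCts hr hm hc hG x).rightLim_eq

lemma distortT_mSet {d F : ℝ → ℝ} (hr : DFRightCts d) (hF : F ∈ mSet) :
    distortT d F = d ∘ F :=
  distortT_eq_comp hr hF.1 hF.2.1 (mSet_mem_Icc hF)

lemma comp_mem_mSet {d F : ℝ → ℝ} (hd : IsDF d) (hr : DFRightCts d) (hF : F ∈ mSet) :
    d ∘ F ∈ mSet := by
  refine ⟨fun x y h => hd.1 (mSet_mem_Icc hF x) (mSet_mem_Icc hF y) (hF.1 h),
    comp_rightCts hr hF.1 hF.2.1 (mSet_mem_Icc hF), ?_, ?_⟩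
  · obtain ⟨a, ha⟩ := hF.2.2.1
    exact ⟨a, fun x hx => by simp [ha x hx, hd.2.1]⟩
  · obtain ⟨b, hb⟩ := hF.2.2.2
    exact ⟨b, fun x hx => by simp [hb x hx, hd.2.2]⟩

lemma ContinuousOn.dfRightCts {d : ℝ → ℝ} (hc : ContinuousOn d (Icc 0 1)) : DFRightCts d := by
  intro x hx
  have hsub : Ioo x 1 ⊆ Icc 0 1 := fun y hy => ⟨hx.1.trans hy.1.le, hy.2.le⟩
  have := (hc x ⟨hx.1, hx.2.le⟩).mono hsub
  exact (continuousWithinAt_Ioo_iff_Ioi hx.2).1 this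

lemma stepFn_rightCts (p x : ℝ) : ContinuousWithinAt (stepFn p) (Ici x) x := by
  rcases le_or_gt p x with h | h
  · refine (continuousWithinAt_const (b := (1 : ℝ))).congr (fun y hy => ?_) ?_
    · simp [stepFn, h.trans hy]
    · simp [stepFn, h]
  · refine ContinuousAt.continuousWithinAt ?_
    refine (continuousAt_const (y := (0 : ℝ))).congr ?_
    filter_upwards [Iio_mem_nhds h] with y hy
    simp [stepFn, not_le.2 (mem_Iio.1 hy)]

lemma stepFn_mono (p : ℝ) : Monotone (stepFn p) := by
  intro x y h
  unfold stepFn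
  split_ifs with h1 h2 <;> linarith

lemma stepFn_mem (p : ℝ) : stepFn p ∈ mSet := by
  refine ⟨stepFn_mono p, stepFn_rightCts p, ⟨p - 1, fun x hx => ?_⟩, ⟨p, fun x hx => ?_⟩⟩
  · simp only [stepFn]; rw [if_neg]; linarith
  · simp [stepFn, hx]

lemma stepFn_isDF {p : ℝ} (h0 : 0 < p) (h1 : p ≤ 1) : IsDF (stepFn p) :=
  ⟨(stepFn_mono p).monotoneOn _, by simp [stepFn, h0], by simp [stepFn, h1]⟩

lemma stepFn_dfRightCts (p : ℝ) : DFRightCts (stepFn p) :=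
  fun x _ => (stepFn_rightCts p x).mono Ioi_subset_Ici_self

/-- There is a right-continuous distortion function with any prescribed value at an interior
point. -/
lemma exists_df_value {w g : ℝ} (hw0 : 0 < w) (hw1 : w < 1) (hg : g ∈ Icc (0 : ℝ) 1) :
    ∃ d, IsDF d ∧ DFRightCts d ∧ d w = g := by
  refine ⟨fun t => g * stepFn w t + (1 - g) * stepFn 1 t, ⟨?_, ?_, ?_⟩, ?_, ?_⟩
  · refine Monotone.monotoneOn (fun x y h => ?_) _
    exact add_le_add (mul_le_mul_of_nonneg_left (stepFn_mono w h) hg.1)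
      (mul_le_mul_of_nonneg_left (stepFn_mono 1 h) (by linarith [hg.2]))
  · simp only [stepFn]; rw [if_neg (not_le.2 hw0), if_neg (by norm_num)]; ring
  · simp [stepFn, hw1.le]
  · intro x hx
    exact ((stepFn_dfRightCts w x hx).const_mul g).add
      ((stepFn_dfRightCts 1 x hx).const_mul (1 - g))
  · simp [stepFn, hw1]

lemma twoPoint_mem {a b t : ℝ} (hab : a < b) (ht : t ∈ Icc (0 : ℝ) 1) :
    twoPoint a b t ∈ mSet := by
  have h : twoPoint a b t = fun x => t * stepFn a x + (1 - t) * stepFn b x := by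
    funext x
    unfold twoPoint stepFn
    split_ifs <;> linarith
  rw [h]
  refine ⟨fun x y h => ?_, fun x => ?_, ⟨a - 1, fun x hx => ?_⟩, ⟨b, fun x hx => ?_⟩⟩
  · exact add_le_add (mul_le_mul_of_nonneg_left (stepFn_mono a h) ht.1)
      (mul_le_mul_of_nonneg_left (stepFn_mono b h) (by linarith [ht.2]))
  · exact ((stepFn_rightCts a x).const_mul t).add ((stepFn_rightCts b x).const_mul (1 - t))
  · simp only [stepFn]; rw [if_neg (by linarith), if_neg (by linarith)]; ring
  · simp only [stepFn]; rw [if_pos (by linarith), if_pos (by linarith)]; ring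

lemma comp_twoPoint {d : ℝ → ℝ} (hd : IsDF d) (a b t : ℝ) :
    d ∘ twoPoint a b t = twoPoint a b (d t) := by
  funext x
  simp only [Function.comp, twoPoint]
  split_ifs <;> simp [hd.2.1, hd.2.2]

lemma twoPoint_zero {a b : ℝ} (hab : a < b) : twoPoint a b 0 = stepFn b := by
  funext x
  unfold twoPoint stepFn
  split_ifs <;> linarith

lemma twoPoint_one {a b : ℝ} (hab : a < b) : twoPoint a b 1 = stepFn a := by
  funext x
  unfold twoPoint stepFn
  split_ifs <;> linarith

/-- Existence of the left `p`-quantile: the upper level set `{F ≥ p}` is a closed half-line. -/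
lemma exists_quantile {F : ℝ → ℝ} (hF : F ∈ mSet) {p : ℝ} (h0 : 0 < p) (h1 : p ≤ 1) :
    ∃ q, ∀ x, p ≤ F x ↔ q ≤ x := by
  obtain ⟨hm, hc, ⟨a, ha⟩, ⟨b, hb⟩⟩ := hF
  have hne : {x | p ≤ F x}.Nonempty := ⟨b, by simp [hb b le_rfl, h1]⟩
  have hbd : BddBelow {x | p ≤ F x} := ⟨a, fun x hx => by
    by_contra hlt
    have := ha x (not_le.1 hlt).le
    have : p ≤ F x := hx
    linarith⟩
  refine ⟨sInf {x | p ≤ F x}, fun x => ⟨fun hx => csInf_le hbd hx, fun hx => ?_⟩⟩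
  refine le_trans ?_ (hm hx)
  -- The infimum is attained by right-continuity.
  have hcont : Tendsto F (𝓝[>] (sInf {x | p ≤ F x})) (𝓝 (F (sInf {x | p ≤ F x}))) :=
    (hc _).mono Ioi_subset_Ici_self
  refine ge_of_tendsto hcont ?_
  filter_upwards [self_mem_nhdsWithin] with y hy
  obtain ⟨z, hz, hzy⟩ := exists_lt_of_csInf_lt hne (mem_Ioi.1 hy)
  exact le_trans hz (hm hzy.le)

lemma stepFn_comp {F : ℝ → ℝ} {p q : ℝ} (h : ∀ x, p ≤ F x ↔ q ≤ x) :
    stepFn p ∘ F = stepFn q := by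
  funext x
  simp [stepFn, h x]

lemma stepFn_le_stepFn_iff {p q : ℝ} : (∀ x, stepFn q x ≤ stepFn p x) ↔ p ≤ q := by
  constructor
  · intro h
    have := h q
    by_contra hn
    simp only [stepFn, le_refl, if_true, if_neg hn] at this
    linarith
  · intro h x
    unfold stepFn
    split_ifs <;> linarith

lemma continuousOn_of_surjOn {f : ℝ → ℝ} (hm : MonotoneOn f (Icc 0 1))
    (hmap : MapsTo f (Icc 0 1) (Icc 0 1)) (hs : SurjOn f (Icc 0 1) (Icc 0 1)) :
    ContinuousOn f (Icc 0 1) := by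
  have h1 : Continuous (hmap.restrict f (Icc 0 1) (Icc 0 1)) := by
    apply Monotone.continuous_of_surjective
    · intro x y h
      exact hm x.2 y.2 h
    · rintro ⟨y, hy⟩
      obtain ⟨x, hx, rfl⟩ := hs hy
      exact ⟨⟨x, hx⟩, rfl⟩
  rw [continuousOn_iff_continuous_domRestrict]
  exact continuous_subtype_val.comp h1

lemma exists_inverse_df {d : ℝ → ℝ} (hd : IsDF d) (hs : StrictMonoOn d (Icc 0 1))
    (hc : ContinuousOn d (Icc 0 1)) :
    ∃ g, IsDF g ∧ StrictMonoOn g (Icc 0 1) ∧ ContinuousOn g (Icc 0 1) ∧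
      (∀ t ∈ Icc (0 : ℝ) 1, g (d t) = t) ∧ ∀ t ∈ Icc (0 : ℝ) 1, d (g t) = t := by
  have hsurj : ∀ s : ℝ, ∃ t, s ∈ Icc (0 : ℝ) 1 → t ∈ Icc (0 : ℝ) 1 ∧ d t = s := by
    intro s
    by_cases h : s ∈ Icc (0 : ℝ) 1
    · have := intermediate_value_Icc zero_le_one hc
      rw [hd.2.1, hd.2.2] at this
      obtain ⟨t, ht, hts⟩ := this h
      exact ⟨t, fun _ => ⟨ht, hts⟩⟩
    · exact ⟨0, fun h' => absurd h' h⟩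
  choose g hg using hsurj
  have hdg : ∀ t ∈ Icc (0 : ℝ) 1, d (g t) = t := fun t ht => (hg t ht).2
  have hmap : MapsTo g (Icc 0 1) (Icc 0 1) := fun t ht => (hg t ht).1
  have hgd : ∀ t ∈ Icc (0 : ℝ) 1, g (d t) = t := fun t ht =>
    hs.injOn (hmap (hd.mem ht)) ht (hdg _ (hd.mem ht))
  have hgs : StrictMonoOn g (Icc 0 1) := by
    intro x hx y hy hxy
    rw [← hs.lt_iff_lt (hmap hx) (hmap hy), hdg x hx, hdg y hy]
    exact hxy
  refine ⟨g, ⟨hgs.monotoneOn, ?_, ?_⟩, hgs, ?_, hgd, hdg⟩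
  · have := hgd 0 (by simp)
    rwa [hd.2.1] at this
  · have := hgd 1 (by simp)
    rwa [hd.2.2] at this
  · exact continuousOn_of_surjOn hgs.monotoneOn hmap fun t ht => ⟨d t, hd.mem ht, hgd t ht⟩

/-- Sandwiching a right-continuous distortion function between continuous ones, the inner one
strictly increasing, keeps it a right-continuous distortion function. -/
lemma sandwich_df {h e d : ℝ → ℝ} (hh : IsDF h) (hhc : ContinuousOn h (Icc 0 1))
    (he : IsDF e) (hes : StrictMonoOn e (Icc 0 1)) (hec : ContinuousOn e (Icc 0 1))
    (hd : IsDF d) (hr : DFRightCts d) :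
    IsDF (h ∘ d ∘ e) ∧ DFRightCts (h ∘ d ∘ e) := by
  refine ⟨⟨fun x hx y hy hxy => ?_, ?_, ?_⟩, fun x hx => ?_⟩
  · exact hh.1 (hd.mem (he.mem hx)) (hd.mem (he.mem hy))
      (hd.1 (he.mem hx) (he.mem hy) (he.1 hx hy hxy))
  · simp [he.2.1, hd.2.1, hh.2.1]
  · simp [he.2.2, hd.2.2, hh.2.2]
  · have hx' : x ∈ Icc (0 : ℝ) 1 := ⟨hx.1, hx.2.le⟩
    have hsub : ∀ y ∈ Ioo x 1, y ∈ Icc (0 : ℝ) 1 := fun y hy => ⟨hx.1.trans hy.1.le, hy.2.le⟩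
    have hex : e x < 1 := by
      rw [← he.2.2]; exact hes hx' (by simp) hx.2
    rw [← continuousWithinAt_Ioo_iff_Ioi hx.2]
    have h1 : ContinuousWithinAt (d ∘ e) (Ioo x 1) x :=
      (hr (e x) ⟨(he.mem hx').1, hex⟩).comp ((hec x hx').mono hsub)
        fun y hy => hes hx' (hsub y hy) hy.1
    exact ContinuousWithinAt.comp (f := d ∘ e) (hhc (d (e x)) (hd.mem (he.mem hx'))) h1
      fun y hy => hd.mem (he.mem (hsub y hy))

/-! ### The utility transform -/

lemma mSet_tendsto {F : ℝ → ℝ} (hF : F ∈ mSet) :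
    Tendsto F atBot (𝓝 0) ∧ Tendsto F atTop (𝓝 1) := by
  obtain ⟨-, -, ⟨a, ha⟩, ⟨b, hb⟩⟩ := hF
  constructor
  · refine tendsto_const_nhds.congr' ?_
    filter_upwards [eventually_le_atBot a] with x hx using (ha x hx).symm
  · refine tendsto_const_nhds.congr' ?_
    filter_upwards [eventually_ge_atTop b] with x hx using (hb x hx).symm

lemma utilityT_apply {u F : ℝ → ℝ} (hu : Monotone u) (hF : F ∈ mSet) (x : ℝ) :
    utilityT u F x =
      ((StieltjesFunction.measure ⟨F, hF.1, hF.2.1⟩) {y | u y ≤ x}).toReal := by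
  unfold utilityT
  rw [dif_pos ⟨hF.1, hF.2.1⟩]
  rw [Measure.map_apply hu.measurable measurableSet_Iic]
  rfl

lemma utilityT_regular {u F : ℝ → ℝ} (hu : Monotone u) (hF : F ∈ mSet) :
    Monotone (utilityT u F) ∧ (∀ x, ContinuousWithinAt (utilityT u F) (Ici x) x) ∧
      ∀ x, utilityT u F x ∈ Icc (0 : ℝ) 1 := by
  set f : StieltjesFunction ℝ := ⟨F, hF.1, hF.2.1⟩ with hf
  have : IsProbabilityMeasure f.measure :=
    f.isProbabilityMeasure (mSet_tendsto hF).1 (mSet_tendsto hF).2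
  have : IsProbabilityMeasure (f.measure.map u) :=
    Measure.isProbabilityMeasure_map hu.measurable.aemeasurable
  have key : utilityT u F = ProbabilityTheory.cdf (f.measure.map u) := by
    funext x
    rw [ProbabilityTheory.cdf_eq_real]
    unfold utilityT
    rw [dif_pos ⟨hF.1, hF.2.1⟩]
    rfl
  rw [key]
  exact ⟨ProbabilityTheory.monotone_cdf _, (ProbabilityTheory.cdf _).right_continuous,
    fun x => ⟨ProbabilityTheory.cdf_nonneg _ x, ProbabilityTheory.cdf_le_one _ x⟩⟩

/-- For left-continuous increasing `u`, the set `{u ≤ x}` is empty, everything, or a closed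
half-line, and `T^u F x` is accordingly `0`, `1` or a value of `F`. -/
lemma utilityT_cases {u : ℝ → ℝ} (hu : IsLeftCtsIncr u) (x : ℝ) :
    ((∀ y, x < u y) ∧ ∀ F ∈ mSet, utilityT u F x = 0) ∨
    ((∀ y, u y ≤ x) ∧ ∀ F ∈ mSet, utilityT u F x = 1) ∨
    ∃ a, (∀ y, u y ≤ x ↔ y ≤ a) ∧ ∀ F ∈ mSet, utilityT u F x = F a := by
  by_cases h1 : ∀ y, x < u y
  · refine Or.inl ⟨h1, fun F hF => ?_⟩
    rw [utilityT_apply hu.1 hF]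
    have : {y | u y ≤ x} = ∅ := by
      ext y; simpa using h1 y
    simp [this]
  by_cases h2 : ∀ y, u y ≤ x
  · refine Or.inr (Or.inl ⟨h2, fun F hF => ?_⟩)
    rw [utilityT_apply hu.1 hF]
    have : {y | u y ≤ x} = univ := by
      ext y; simpa using h2 y
    rw [this, StieltjesFunction.measure_univ _ (mSet_tendsto hF).1 (mSet_tendsto hF).2]
    simp
  push Not at h1 h2
  obtain ⟨y0, hy0⟩ := h1
  obtain ⟨y1, hy1⟩ := h2
  have hbd : BddAbove {y | u y ≤ x} := ⟨y1, fun y hy => by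
    by_contra hn
    have h3 : u y ≤ x := hy
    have h4 := hu.1 (not_le.1 hn).le
    linarith⟩
  have ha : ∀ y, u y ≤ x ↔ y ≤ sSup {y | u y ≤ x} := by
    intro y
    refine ⟨fun hy => le_csSup hbd hy, fun hy => (hu.1 hy).trans ?_⟩
    -- The supremum is attained by left-continuity.
    have hcont : Tendsto u (𝓝[<] (sSup {y | u y ≤ x})) (𝓝 (u (sSup {y | u y ≤ x}))) :=
      (hu.2 _).mono Iio_subset_Iic_self
    refine le_of_tendsto hcont ?_
    filter_upwards [self_mem_nhdsWithin] with z hz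
    obtain ⟨w, hw, hzw⟩ := exists_lt_of_lt_csSup ⟨y0, hy0⟩ (mem_Iio.1 hz)
    exact (hu.1 hzw.le).trans hw
  refine Or.inr (Or.inr ⟨_, ha, fun F hF => ?_⟩)
  rw [utilityT_apply hu.1 hF]
  have : {y | u y ≤ x} = Iic (sSup {y | u y ≤ x}) := by
    ext y; exact ha y
  rw [this, StieltjesFunction.measure_Iic _ (mSet_tendsto hF).1]
  rw [← this, sub_zero]
  exact ENNReal.toReal_ofReal (mSet_mem_Icc hF _).1

lemma utilityT_comp {u d F : ℝ → ℝ} (hu : IsLeftCtsIncr u) (hd : IsDF d) (hr : DFRightCts d)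
    (hF : F ∈ mSet) : utilityT u (d ∘ F) = d ∘ utilityT u F := by
  funext x
  have hdF := comp_mem_mSet hd hr hF
  rcases utilityT_cases hu x with ⟨-, h⟩ | ⟨-, h⟩ | ⟨a, -, h⟩
  · simp [h F hF, h _ hdF, hd.2.1]
  · simp [h F hF, h _ hdF, hd.2.2]
  · simp [h F hF, h _ hdF]

/-- The left `p`-quantile of `T^u F` is `u` of the left `p`-quantile `q` of `F`. -/
lemma le_utilityT_iff {u F : ℝ → ℝ} (hu : IsLeftCtsIncr u) (hF : F ∈ mSet) {p q : ℝ}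
    (h0 : 0 < p) (h1 : p ≤ 1) (hq : ∀ x, p ≤ F x ↔ q ≤ x) (x : ℝ) :
    p ≤ utilityT u F x ↔ u q ≤ x := by
  rcases utilityT_cases hu x with ⟨h, h'⟩ | ⟨h, h'⟩ | ⟨a, h, h'⟩
  · rw [h' F hF]
    exact ⟨fun hp => absurd h0 (not_lt.2 hp), fun hp => absurd (h q) (not_lt.2 hp)⟩
  · rw [h' F hF]
    exact ⟨fun _ => h q, fun _ => h1⟩
  · rw [h' F hF, h, hq]

/-! ### Transforms commuting with the set of distortions -/

/-- One half of `T` commuting with `𝒟^R`: every `T ∘ T_d` is some `T_{d'} ∘ T`. Since all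
distortion functions involved are right-continuous, `T_d F` is written as `d ∘ F`. -/
def PushesLeft (T : (ℝ → ℝ) → ℝ → ℝ) : Prop :=
  ∀ d : ℝ → ℝ, IsDF d → DFRightCts d → ∃ d' : ℝ → ℝ, IsDF d' ∧ DFRightCts d' ∧
    ∀ F ∈ mSet, d' ∘ T F = T (d ∘ F)

/-- The other half of `T` commuting with `𝒟^R`: every `T_{d'} ∘ T` is some `T ∘ T_d`. -/
def PushesRight (T : (ℝ → ℝ) → ℝ → ℝ) : Prop :=
  ∀ d' : ℝ → ℝ, IsDF d' → DFRightCts d' → ∃ d : ℝ → ℝ, IsDF d ∧ DFRightCts d ∧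
    ∀ F ∈ mSet, d' ∘ T F = T (d ∘ F)

/-- `T` maps point masses to point masses, because exactly these laws are fixed by all
distortions. -/
lemma exists_point_map {T : (ℝ → ℝ) → ℝ → ℝ} (hT : ∀ F ∈ mSet, T F ∈ mSet)
    (hR : PushesRight T) : ∃ u : ℝ → ℝ, ∀ x, T (stepFn x) = stepFn (u x) := by
  have hsq : IsDF (fun t : ℝ => t ^ 2) :=
    ⟨fun x hx y hy h => pow_le_pow_left₀ hx.1 h 2, by norm_num, by norm_num⟩
  have hsqr : DFRightCts (fun t : ℝ => t ^ 2) := fun x _ =>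
    (continuous_pow 2).continuousWithinAt
  obtain ⟨d, hd, hdr, h⟩ := hR _ hsq hsqr
  have : ∀ x, ∃ c, T (stepFn x) = stepFn c := by
    intro x
    have hx := h (stepFn x) (stepFn_mem x)
    have hfix : d ∘ stepFn x = stepFn x := by
      funext y
      simp only [Function.comp, stepFn]
      split_ifs
      · exact hd.2.2
      · exact hd.2.1
    rw [hfix] at hx
    obtain ⟨c, hc⟩ := exists_quantile (hT _ (stepFn_mem x)) zero_lt_one le_rfl
    refine ⟨c, ?_⟩
    rw [← stepFn_comp hc]
    funext y
    have hy : (T (stepFn x) y) ^ 2 = T (stepFn x) y := congrFun hx y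
    have : T (stepFn x) y * (T (stepFn x) y - 1) = 0 := by linarith
    simp only [Function.comp, stepFn]
    rcases mul_eq_zero.1 this with h0 | h0
    · rw [h0]; norm_num
    · rw [sub_eq_zero.1 h0]; norm_num
  choose u hu using this
  exact ⟨u, hu⟩

/-- If `T` is not constant on point masses, there is an increasing bijection `ψ` of `[0, 1]` such
that the left `ψ p`-quantile of `T F` is `u` of the left `p`-quantile of `F`. -/
lemma exists_quantile_rule {T : (ℝ → ℝ) → ℝ → ℝ} (hT : ∀ F ∈ mSet, T F ∈ mSet)
    (hL : PushesLeft T) (hR : PushesRight T) {u : ℝ → ℝ}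
    (hu : ∀ x, T (stepFn x) = stepFn (u x)) {a b : ℝ} (hab : a < b) (huab : u a < u b) :
    ∃ ψ : ℝ → ℝ, IsDF ψ ∧ StrictMonoOn ψ (Icc 0 1) ∧ SurjOn ψ (Icc 0 1) (Icc 0 1) ∧
      ∀ F ∈ mSet, ∀ p q : ℝ, 0 < p → p ≤ 1 → (∀ x, p ≤ F x ↔ q ≤ x) →
        ∀ x, ψ p ≤ T F x ↔ u q ≤ x := by
  obtain ⟨ψ, hψ⟩ : ∃ ψ : ℝ → ℝ, ∀ t, ψ t = T (twoPoint a b t) (u a) := ⟨_, fun _ => rfl⟩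
  have hψm : ∀ t ∈ Icc (0 : ℝ) 1, ψ t ∈ Icc (0 : ℝ) 1 := fun t ht => by
    rw [hψ]; exact mSet_mem_Icc (hT _ (twoPoint_mem hab ht)) _
  have hψ0 : ψ 0 = 0 := by
    rw [hψ, twoPoint_zero hab, hu]; simp [stepFn, huab]
  have hψ1 : ψ 1 = 1 := by
    rw [hψ, twoPoint_one hab, hu]; simp [stepFn]
  -- Two-point laws turn the commutation relation into an identity between functions on `[0, 1]`.
  have hconj : ∀ d d' : ℝ → ℝ, IsDF d → (∀ F ∈ mSet, d' ∘ T F = T (d ∘ F)) →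
      ∀ t ∈ Icc (0 : ℝ) 1, d' (ψ t) = ψ (d t) := by
    intro d d' hd h t ht
    have := congrFun (h _ (twoPoint_mem hab ht)) (u a)
    rw [comp_twoPoint hd] at this
    rw [hψ, hψ]
    exact this
  have hstrict : StrictMonoOn ψ (Icc 0 1) := by
    intro t ht p hp htp
    have hp0 : 0 < p := lt_of_le_of_lt ht.1 htp
    obtain ⟨d', hd', -, h⟩ := hL _ (stepFn_isDF hp0 hp.2) (stepFn_dfRightCts p)
    have hc := hconj _ d' (stepFn_isDF hp0 hp.2) h
    have e1 : d' (ψ t) = 0 := by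
      rw [hc t ht]; simp [stepFn, not_le.2 htp, hψ0]
    have e2 : d' (ψ p) = 1 := by
      rw [hc p hp]; simp [stepFn, hψ1]
    by_contra hn
    have := hd'.1 (hψm p hp) (hψm t ht) (not_lt.1 hn)
    linarith
  have hhalf : (1 / 2 : ℝ) ∈ Icc (0 : ℝ) 1 := by constructor <;> norm_num
  have hsurj : SurjOn ψ (Icc 0 1) (Icc 0 1) := by
    intro g hg
    have hw0 : 0 < ψ (1 / 2) := by
      rw [← hψ0]; exact hstrict (by simp) hhalf (by norm_num)
    have hw1 : ψ (1 / 2) < 1 :=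
      (hstrict hhalf (by simp) (by norm_num)).trans_eq hψ1
    obtain ⟨d', hd', hr', hv⟩ := exists_df_value hw0 hw1 hg
    obtain ⟨d, hd, -, h⟩ := hR d' hd' hr'
    exact ⟨d (1 / 2), hd.mem hhalf, by rw [← hconj d d' hd h _ hhalf, hv]⟩
  refine ⟨ψ, ⟨hstrict.monotoneOn, hψ0, hψ1⟩, hstrict, hsurj, ?_⟩
  intro F hF p q hp0 hp1 hq x
  have hp : p ∈ Icc (0 : ℝ) 1 := ⟨hp0.le, hp1⟩
  have hs0 : 0 < ψ p := by
    rw [← hψ0]; exact hstrict (by simp) hp hp0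
  obtain ⟨d, hd, hdr, h⟩ := hR _ (stepFn_isDF hs0 (hψm p hp).2) (stepFn_dfRightCts (ψ p))
  have hc := hconj d _ hd h
  -- By injectivity of `ψ`, the function `d` is the indicator of `[p, 1]` on `[0, 1]`.
  have hdstep : ∀ t ∈ Icc (0 : ℝ) 1, d t = stepFn p t := by
    intro t ht
    have h3 := hc t ht
    simp only [stepFn, hstrict.le_iff_le hp ht] at h3 ⊢
    split_ifs at h3 ⊢ with h4
    · exact hstrict.injOn (hd.mem ht) (by simp) (by rw [← h3, hψ1])
    · exact hstrict.injOn (hd.mem ht) (by simp) (by rw [← h3, hψ0])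
  have hdF : d ∘ F = stepFn q := by
    rw [← stepFn_comp hq]
    funext y
    exact hdstep _ (mSet_mem_Icc hF y)
  have h5 := congrFun (h F hF) x
  rw [hdF, hu] at h5
  simp only [Function.comp, stepFn] at h5
  split_ifs at h5 with h6 h7 h7
  · exact iff_of_true h6 h7
  · norm_num at h5
  · norm_num at h5
  · exact iff_of_false h6 h7

/-- The quantile rule, applied to the uniform law on `[x - 1, x]`, yields left-continuity. -/
lemma leftCts_of_quantile_rule {T : (ℝ → ℝ) → ℝ → ℝ} {u ψ : ℝ → ℝ} (hu : Monotone u)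
    (hT : ∀ F ∈ mSet, T F ∈ mSet)
    (hψ : IsDF ψ) (hs : SurjOn ψ (Icc 0 1) (Icc 0 1))
    (h : ∀ F ∈ mSet, ∀ p q : ℝ, 0 < p → p ≤ 1 → (∀ x, p ≤ F x ↔ q ≤ x) →
      ∀ x, ψ p ≤ T F x ↔ u q ≤ x) : IsLeftCtsIncr u := by
  refine ⟨hu, fun x => ?_⟩
  obtain ⟨F, hFdef⟩ : ∃ F : ℝ → ℝ, ∀ y, F y = max 0 (min 1 (y - x + 1)) := ⟨_, fun _ => rfl⟩
  have hF : F ∈ mSet := by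
    have : F = fun y => max 0 (min 1 (y - x + 1)) := funext hFdef
    refine ⟨fun y z hyz => ?_, fun y => ?_, ⟨x - 1, fun y hy => ?_⟩, ⟨x, fun y hy => ?_⟩⟩
    · rw [hFdef, hFdef]; gcongr
    · rw [this]
      exact Continuous.continuousWithinAt (by fun_prop)
    · rw [hFdef]
      exact max_eq_left ((min_le_right _ _).trans (by linarith))
    · rw [hFdef, min_eq_left (by linarith)]; norm_num
  have hrule : ∀ p, 0 < p → p ≤ 1 → ∀ y, ψ p ≤ T F y ↔ u (x - 1 + p) ≤ y := by
    intro p h0 h1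
    refine h F hF p _ h0 h1 fun y => ?_
    rw [hFdef, le_max_iff, le_min_iff]
    constructor
    · rintro (h2 | h2) <;> linarith [h2]
    · intro h2; exact Or.inr ⟨h1, by linarith⟩
  refine tendsto_order.2 ⟨fun y hy => ?_, fun y hy => ?_⟩
  · have h1 := hrule 1 one_pos le_rfl y
    rw [hψ.2.2, sub_add_cancel] at h1
    have hlt : T F y < 1 := not_le.1 fun hh => absurd (h1.1 hh) (not_le.2 hy)
    have h0 := (mSet_mem_Icc (hT F hF) y).1
    obtain ⟨p, hp, hpe⟩ := hs (show (T F y + 1) / 2 ∈ Icc (0 : ℝ) 1 from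
      ⟨by linarith, by linarith⟩)
    have hp0 : 0 < p := lt_of_le_of_ne hp.1 fun hh => by
      rw [← hh, hψ.2.1] at hpe; linarith
    have hp1 : p < 1 := lt_of_le_of_ne hp.2 fun hh => by
      rw [hh, hψ.2.2] at hpe; linarith
    have h2 : y < u (x - 1 + p) := not_le.1 fun hh => by
      have := (hrule p hp0 hp.2 y).2 hh
      linarith
    filter_upwards [mem_nhdsWithin_of_mem_nhds (Ioi_mem_nhds (show x - 1 + p < x by linarith))]
      with z hz
    exact h2.trans_le (hu (mem_Ioi.1 hz).le)
  · filter_upwards [self_mem_nhdsWithin] with z hz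
    exact (hu hz).trans_lt hy

/-- A monotone map `T : M → M` commutes with the set `𝒟^R` of probability
distortions generated by right-continuous distortion functions
(`𝒟^R ∘ T = T ∘ 𝒟^R` as sets of maps `M → M`) if and only if
`T = T_d ∘ T^u` for some increasing left-continuous `u : ℝ → ℝ` and some
strictly increasing continuous distortion function `d`. -/
theorem stmt4 (T : (ℝ → ℝ) → ℝ → ℝ) (hT : ∀ F ∈ mSet, T F ∈ mSet)
    (hmono : ∀ F ∈ mSet, ∀ G ∈ mSet, (∀ x, G x ≤ F x) → ∀ x, T G x ≤ T F x) :
    ((∀ d : ℝ → ℝ, IsDF d → DFRightCts d → ∃ d' : ℝ → ℝ, IsDF d' ∧ DFRightCts d' ∧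
        ∀ F ∈ mSet, distortT d' (T F) = T (distortT d F)) ∧
      (∀ d' : ℝ → ℝ, IsDF d' → DFRightCts d' → ∃ d : ℝ → ℝ, IsDF d ∧ DFRightCts d ∧
        ∀ F ∈ mSet, distortT d' (T F) = T (distortT d F))) ↔
      ∃ d u : ℝ → ℝ, IsLeftCtsIncr u ∧ IsDF d ∧ StrictMonoOn d (Set.Icc 0 1) ∧
        ContinuousOn d (Set.Icc 0 1) ∧
        ∀ F ∈ mSet, T F = distortT d (utilityT u F) := by
  constructor
  · rintro ⟨hL, hR⟩
    replace hL : PushesLeft T := by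
      intro d hd hr
      obtain ⟨d', hd', hr', h⟩ := hL d hd hr
      refine ⟨d', hd', hr', fun F hF => ?_⟩
      rw [← distortT_mSet hr' (hT F hF), h F hF, distortT_mSet hr hF]
    replace hR : PushesRight T := by
      intro d' hd' hr'
      obtain ⟨d, hd, hr, h⟩ := hR d' hd' hr'
      refine ⟨d, hd, hr, fun F hF => ?_⟩
      rw [← distortT_mSet hr' (hT F hF), h F hF, distortT_mSet hr hF]
    obtain ⟨u, hu⟩ := exists_point_map hT hR
    have humono : Monotone u := by
      intro x y hxy
      rw [← stepFn_le_stepFn_iff, ← hu, ← hu]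
      exact hmono _ (stepFn_mem x) _ (stepFn_mem y) (stepFn_le_stepFn_iff.2 hxy)
    by_cases hconst : ∀ x y, u x = u y
    · refine ⟨id, u, ⟨humono, fun x => ?_⟩, ⟨monotoneOn_id, rfl, rfl⟩,
        strictMono_id.strictMonoOn _, continuousOn_id, fun F hF => ?_⟩
      · exact (continuousWithinAt_const (b := u 0)).congr (fun y _ => hconst y 0) (hconst x 0)
      have hreg := utilityT_regular humono hF
      rw [distortT_eq_comp continuousOn_id.dfRightCts hreg.1 hreg.2.1 hreg.2.2]
      obtain ⟨a, ha⟩ := hF.2.2.1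
      obtain ⟨b, hb⟩ := hF.2.2.2
      -- `F` lies between two point masses, which have the same image under `T`.
      have hlo : ∀ x, T F x ≤ stepFn (u 0) x := by
        rw [hconst 0 a, ← hu]
        refine hmono _ (stepFn_mem a) _ hF fun x => ?_
        unfold stepFn
        split_ifs with hx
        · exact (mSet_mem_Icc hF x).2
        · rw [ha x (not_le.1 hx).le]
      have hhi : ∀ x, stepFn (u 0) x ≤ T F x := by
        rw [hconst 0 b, ← hu]
        refine hmono _ hF _ (stepFn_mem b) fun x => ?_
        unfold stepFn
        split_ifs with hx
        · rw [hb x hx]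
        · exact (mSet_mem_Icc hF x).1
      funext x
      rw [le_antisymm (hlo x) (hhi x), Function.comp, utilityT_apply humono hF]
      by_cases hx : u 0 ≤ x
      · have : {y | u y ≤ x} = univ := by
          ext y; simp [hconst y 0, hx]
        rw [this, StieltjesFunction.measure_univ _ (mSet_tendsto hF).1 (mSet_tendsto hF).2]
        simp [stepFn, hx]
      · have : {y | u y ≤ x} = ∅ := by
          ext y; simp [hconst y 0, not_le.1 hx]
        simp [this, stepFn, hx]
    · push Not at hconst
      obtain ⟨x0, y0, hne⟩ := hconst
      obtain ⟨a, b, hab, huab⟩ : ∃ a b, a < b ∧ u a < u b := by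
        rcases lt_or_gt_of_ne hne with h | h
        · exact ⟨x0, y0, humono.reflect_lt h, h⟩
        · exact ⟨y0, x0, humono.reflect_lt h, h⟩
      obtain ⟨ψ, hψ, hstrict, hsurj, hrule⟩ := exists_quantile_rule hT hL hR hu hab huab
      have hleft := leftCts_of_quantile_rule humono hT hψ hsurj hrule
      have hcont := continuousOn_of_surjOn hψ.1 (fun t ht => hψ.mem ht) hsurj
      refine ⟨ψ, u, hleft, hψ, hstrict, hcont, fun F hF => ?_⟩
      have hreg := utilityT_regular humono hF
      rw [distortT_eq_comp hcont.dfRightCts hreg.1 hreg.2.1 hreg.2.2]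
      funext x
      obtain ⟨w, hw, hwe⟩ := hsurj (mSet_mem_Icc (hT F hF) x)
      rw [← hwe]
      -- `w` and `T^u F x` dominate the same levels `p ∈ (0, 1]`.
      have hlev : ∀ p, 0 < p → p ≤ 1 → (p ≤ w ↔ p ≤ utilityT u F x) := by
        intro p h0 h1
        obtain ⟨q, hq⟩ := exists_quantile hF h0 h1
        rw [le_utilityT_iff hleft hF h0 h1 hq, ← hrule F hF p q h0 h1 hq, ← hwe,
          hstrict.le_iff_le ⟨h0.le, h1⟩ hw]
      have hU := hreg.2.2 x
      have : w = utilityT u F x := by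
        apply le_antisymm
        · rcases hw.1.eq_or_lt with h | h
          · rw [← h]; exact hU.1
          · exact (hlev w h hw.2).1 le_rfl
        · rcases hU.1.eq_or_lt with h | h
          · rw [← h]; exact hw.1
          · exact (hlev _ h hU.2).2 le_rfl
      rw [this, Function.comp]
  · rintro ⟨d, u, hu, hd, hs, hc, hTd⟩
    obtain ⟨g, hg, hgs, hgc, hgd, hdg⟩ := exists_inverse_df hd hs hc
    have hform : ∀ F ∈ mSet, T F = d ∘ utilityT u F := fun F hF => by
      have hreg := utilityT_regular hu.1 hF
      rw [hTd F hF, distortT_eq_comp hc.dfRightCts hreg.1 hreg.2.1 hreg.2.2]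
    -- `e' ∘ d = d ∘ e` on `[0, 1]` is all that is needed of a matching pair `e, e'`.
    have hpair : ∀ e e' : ℝ → ℝ, IsDF e → DFRightCts e → DFRightCts e' →
        (∀ t ∈ Icc (0 : ℝ) 1, e' (d t) = d (e t)) →
        ∀ F ∈ mSet, distortT e' (T F) = T (distortT e F) := by
      intro e e' he her her' hee F hF
      rw [distortT_mSet her' (hT F hF), distortT_mSet her hF,
        hform _ (comp_mem_mSet he her hF), utilityT_comp hu he her hF, hform F hF]
      funext x
      exact hee _ ((utilityT_regular hu.1 hF).2.2 x)
    constructor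
    · intro e he her
      obtain ⟨h1, h2⟩ := sandwich_df hd hc hg hgs hgc he her
      refine ⟨_, h1, h2, hpair e _ he her h2 fun t ht => ?_⟩
      simp [hgd t ht]
    · intro e' he' her'
      obtain ⟨h1, h2⟩ := sandwich_df hg hgc hd hs hc he' her'
      refine ⟨_, h1, h2, hpair _ e' h1 h2 her' fun t ht => ?_⟩
      simp [hdg _ (he'.mem (hd.mem ht))]
end
end
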